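/- Let x : ℕ → ℝ be such that for every n ∈ ℕ the series ∑_{k=n}^∞ \binom{k}{n}(-1)^k x_k converges with sum x_n (in the sense of HasSum for the family k ↦ \binom{n+k}{n}(-1)^{n+k} x_{n+k}). Define y : ℕ → ℝ by y_0 = x_0 and y_n = x_n + 2 x_{n-1} for n ≥ 1. Then for every n ∈ ℕ the series ∑_{k=n}^∞ \binom{k}{n}(-1)^k y_k converges with sum -y_n. -/

import Mathlib

/-!
Let `T` be the transform `(T a) n = ∑ₖ ((-1) ^ k * k.choose n) • a k` and let `S = J(0)ᵀ` be the
right shift, so that `(J(1) + J(0))ᵀ = 1 + 2 S`. Pascal's rule says `T S = -(1 + S) T`,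
hence `T (1 + 2 S) = T - 2 (1 + S) T = -(1 + 2 S) T`. As `T` anticommutes with `1 + 2 S`,
a fixed point of `T` is sent by `1 + 2 S` to a sequence that `T` negates.
-/

variable {M : Type*}

theorem hasSum_add_left_iff_of_eq_zero_of_lt [AddCommMonoid M] [TopologicalSpace M]
    {f : ℕ → M} {n : ℕ} {s : M} (hf : ∀ k < n, f k = 0) :
    HasSum (fun k => f (n + k)) s ↔ HasSum f s :=
  (add_right_injective n).hasSum_iff fun k hk =>
    hf k <| not_le.mp fun hnk => hk ⟨k - n, Nat.add_sub_of_le hnk⟩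

/-- The right shift `a₀, a₁, … ↦ 0, a₀, a₁, …` of sequences, i.e. the action of `J(0)ᵀ`. -/
def shiftRight [Zero M] (a : ℕ → M) : ℕ → M
  | 0 => 0
  | n + 1 => a n

/-- `b` is the alternating binomial transform of `a`: for every `n`, the family
`((-1) ^ k * k.choose n) • a k` has sum `b n`. Its terms with `k < n` vanish, so the series may
start at `k = 0`. Invariant sequences of the second kind are those with `b = a`, the inverse
invariant ones those with `b = -a`. -/
def HasAltBinomialTransform [AddCommGroup M] [TopologicalSpace M] (a b : ℕ → M) : Prop :=
  ∀ n, HasSum (fun k => ((-1 : ℤ) ^ k * k.choose n) • a k) (b n)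

theorem hasAltBinomialTransform_iff_hasSum_mul {R : Type*} [Ring R] [TopologicalSpace R]
    {a b : ℕ → R} :
    HasAltBinomialTransform a b ↔
      ∀ n, HasSum (fun k => ((n + k).choose n : R) * (-1) ^ (n + k) * a (n + k)) (b n) := by
  refine forall_congr' fun n => ?_
  rw [← hasSum_add_left_iff_of_eq_zero_of_lt (n := n) fun k hk => by
    simp [Nat.choose_eq_zero_of_lt hk]]
  simp [zsmul_eq_mul, (Nat.cast_commute _ _).eq]

theorem neg_one_pow_succ_mul_choose_succ_zsmul [AddCommGroup M] (k n : ℕ) (m : M) :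
    ((-1 : ℤ) ^ (k + 1) * (k + 1).choose (n + 1)) • m =
      -(((-1 : ℤ) ^ k * k.choose (n + 1)) • m + ((-1 : ℤ) ^ k * k.choose n) • m) := by
  rw [← add_smul, ← neg_smul, Nat.choose_succ_succ]
  congr 1
  push_cast
  ring

section IsTopologicalAddGroup

variable [AddCommGroup M] [TopologicalSpace M] [IsTopologicalAddGroup M] {a b : ℕ → M}

theorem hasAltBinomialTransform_shiftRight (h : HasAltBinomialTransform a b) :
    HasAltBinomialTransform (shiftRight a) (-(b + shiftRight b)) := by
  intro n
  rw [← hasSum_add_left_iff_of_eq_zero_of_lt (n := 1) fun k hk => by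
    simp [Nat.lt_one_iff.mp hk, shiftRight]]
  simp only [add_comm 1]
  cases n with
  | zero => simpa [shiftRight, pow_succ] using (h 0).neg
  | succ n =>
    simpa only [shiftRight, Pi.neg_apply, Pi.add_apply, neg_one_pow_succ_mul_choose_succ_zsmul]
      using ((h (n + 1)).add (h n)).neg

theorem stmt10_general (h : HasAltBinomialTransform a b) :
    HasAltBinomialTransform (a + 2 • shiftRight a) (-(b + 2 • shiftRight b)) := by
  have neg_eq : -(b + 2 • shiftRight b) = b + 2 • -(b + shiftRight b) := by abel
  rw [neg_eq]
  intro n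
  simpa [smul_add, smul_comm (2 : ℕ)]
    using (h n).add ((hasAltBinomialTransform_shiftRight h n).const_smul (2 : ℕ))

end IsTopologicalAddGroup

/-- if `x` is an invariant sequence of the second kind (in the `HasSum`
sense), then `y = (J(1) + J(0))ᵀ x`, i.e. `y 0 = x 0`, `y (n+1) = x (n+1) + 2 x n`,
is an inverse invariant sequence of the second kind. -/
theorem stmt10 (x : ℕ → ℝ)
    (hx : ∀ n, HasSum (fun k => (Nat.choose (n + k) n : ℝ) * (-1) ^ (n + k) * x (n + k)) (x n))
    (y : ℕ → ℝ) (hy0 : y 0 = x 0) (hy : ∀ n, y (n + 1) = x (n + 1) + 2 * x n) :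
    ∀ n, HasSum (fun k => (Nat.choose (n + k) n : ℝ) * (-1) ^ (n + k) * y (n + k)) (-y n) := by
  have y_eq : y = x + 2 • shiftRight x := by
    funext n
    cases n <;> simp [shiftRight, hy0, hy]
  rw [y_eq]
  exact hasAltBinomialTransform_iff_hasSum_mul.mp
    (stmt10_general (hasAltBinomialTransform_iff_hasSum_mul.mpr hx))
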